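/- arXiv:2504.21551 — 2 statements merged into one kernel-verified Lean document; each statement's English description precedes it below -/
import Mathlib

section
/- A superconvex set X is iterative if and only if for all sequences (xᵢ) and (yᵢ) in X satisfying xᵢ = ½·yᵢ + ½·x_{i+1} for all i, it holds that x₀ = Σ'ᵢ 2^{-(i+1)}·yᵢ. -/
/-- A superconvex weight: a nonnegative sequence summing to 1. -/
def IsWeight (lam : ℕ → ℝ) : Prop := (∀ i, 0 ≤ lam i) ∧ ∑' i, lam i = 1

/-- A superconvex structure on `X`: an operation of countable convex combination,
satisfying the projection and composition laws (on genuine weights). -/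
structure SuperconvexStr (X : Type) where
  comb : (ℕ → ℝ) → (ℕ → X) → X
  proj : ∀ lam, IsWeight lam → ∀ k, lam k = 1 → (∀ i, i ≠ k → lam i = 0) →
    ∀ x, comb lam x = x k
  compos : ∀ lam, IsWeight lam → ∀ mu : ℕ → ℕ → ℝ, (∀ i, IsWeight (mu i)) →
    ∀ x : ℕ → X, comb lam (fun i => comb (mu i) x) = comb (fun j => ∑' i, lam i * mu i j) x

/-- The binary combination `λ·x + (1-λ)·y`. -/
def SuperconvexStr.pair {X : Type} (S : SuperconvexStr X) (lam : ℝ) (x y : X) : X :=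
  S.comb (fun i => if i = 0 then lam else if i = 1 then 1 - lam else 0)
    (fun i => if i = 0 then x else y)

/-- Cancellativity of a superconvex structure. -/
def SuperconvexStr.Cancellative {X : Type} (S : SuperconvexStr X) : Prop :=
  ∀ lam : ℝ, 0 < lam → lam < 1 → ∀ x y z : X, S.pair lam x z = S.pair lam y z → x = y

/-- Iterativity of a superconvex structure. -/
def SuperconvexStr.Iterative {X : Type} (S : SuperconvexStr X) : Prop :=
  ∀ (x y : ℕ → X) (lam mu : ℕ → ℝ),
    (∀ i, 0 < lam i ∧ lam i < 1) → (∀ i, 0 < mu i ∧ mu i < 1) →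
    (∀ i, lam i + mu i = 1) →
    (∀ i, x i = S.pair (lam i) (y i) (x (i + 1))) →
    Filter.Tendsto (fun n => ∏ j ∈ Finset.range n, mu j) Filter.atTop (nhds 0) →
    x 0 = S.comb (fun i => lam i * ∏ j ∈ Finset.range i, mu j) y

open Finset Filter Topology

namespace SCProof

theorem isWeight_of_hasSum {u : ℕ → ℝ} (h0 : ∀ i, 0 ≤ u i) (h : HasSum u 1) : IsWeight u :=
  ⟨h0, h.tsum_eq⟩

theorem hasSum_of_isWeight {u : ℕ → ℝ} (h : IsWeight u) : HasSum u 1 := by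
  have hs : Summable u := by
    by_contra hn
    have := h.2
    rw [tsum_eq_zero_of_not_summable hn] at this
    norm_num at this
  have := hs.hasSum
  rwa [h.2] at this

theorem isWeight_of_fin {u : ℕ → ℝ} (N : ℕ) (h0 : ∀ i, 0 ≤ u i) (hz : ∀ i, N ≤ i → u i = 0)
    (h : ∑ i ∈ range N, u i = 1) : IsWeight u := by
  apply isWeight_of_hasSum h0
  rw [← h]
  apply hasSum_sum_of_ne_finset_zero
  intro i hi
  exact hz i (by simpa using hi)

noncomputable def dl (k : ℕ) : ℕ → ℝ := fun j => if j = k then 1 else 0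

theorem dl_weight (k : ℕ) : IsWeight (dl k) := by
  apply isWeight_of_hasSum
  · intro i; unfold dl; split_ifs <;> norm_num
  · exact hasSum_ite_eq k 1

theorem mix_weight {u v : ℕ → ℝ} (hu : IsWeight u) (hv : IsWeight v) {a : ℝ} (h0 : 0 ≤ a)
    (h1 : a ≤ 1) : IsWeight (fun j => a * u j + (1 - a) * v j) := by
  apply isWeight_of_hasSum
  · intro i
    have := mul_nonneg h0 (hu.1 i)
    have := mul_nonneg (sub_nonneg.2 h1) (hv.1 i)
    linarith
  · have := ((hasSum_of_isWeight hu).mul_left a).add ((hasSum_of_isWeight hv).mul_left (1 - a))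
    have e : a * 1 + (1 - a) * 1 = 1 := by ring
    rw [e] at this
    exact this

variable {X : Type} (S : SuperconvexStr X)

theorem comb_dl (k : ℕ) (x : ℕ → X) : S.comb (dl k) x = x k :=
  S.proj _ (dl_weight k) k (by simp [dl]) (fun i hi => by simp [dl, hi]) x

theorem comb_congr {u : ℕ → ℝ} (hu : IsWeight u) {a b : ℕ → X}
    (h : ∀ j, u j ≠ 0 → a j = b j) : S.comb u a = S.comb u b := by
  let c : ℕ → X := fun n => if n % 2 = 0 then a (n / 2) else b (n / 2)
  have hc0 : ∀ j, c (2 * j) = a j := fun j => by simp [c]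
  have hc1 : ∀ j, c (2 * j + 1) = b j := fun j => by
    have h1 : (2 * j + 1) % 2 = 1 := by omega
    have h2 : (2 * j + 1) / 2 = j := by omega
    simp [c, h1, h2]
  let m' : ℕ → ℕ → ℝ := fun j => dl (if u j = 0 then 2 * j + 1 else 2 * j)
  have e1 : a = fun j => S.comb (dl (2 * j)) c := by
    funext j; rw [comb_dl, hc0]
  have e2 : b = fun j => S.comb (m' j) c := by
    funext j
    simp only [m']
    rw [comb_dl]
    split_ifs with hj
    · rw [hc1]
    · rw [hc0, h j hj]
  rw [e1, e2, S.compos u hu _ (fun j => dl_weight _), S.compos u hu m' (fun j => dl_weight _)]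
  congr 1
  funext j
  congr 1
  funext i
  by_cases hi : u i = 0
  · simp [hi]
  · simp [m', hi]

theorem pair_weight {a : ℝ} (h0 : 0 ≤ a) (h1 : a ≤ 1) :
    IsWeight (fun i => if i = 0 then a else if i = 1 then 1 - a else 0) := by
  apply isWeight_of_fin 2
  · intro i; split_ifs <;> linarith
  · intro i hi
    rw [if_neg (by omega), if_neg (by omega)]
  · simp [sum_range_succ]

theorem pair_comb {u v : ℕ → ℝ} (hu : IsWeight u) (hv : IsWeight v) {a : ℝ} (h0 : 0 ≤ a)
    (h1 : a ≤ 1) (z : ℕ → X) :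
    S.pair a (S.comb u z) (S.comb v z) = S.comb (fun j => a * u j + (1 - a) * v j) z := by
  unfold SuperconvexStr.pair
  have : (fun i : ℕ => if i = 0 then S.comb u z else S.comb v z)
      = fun i : ℕ => S.comb ((fun i : ℕ => if i = 0 then u else v) i) z := by
    funext i; dsimp only; split_ifs <;> rfl
  rw [this, S.compos _ (pair_weight h0 h1) _ (fun i => by split_ifs <;> assumption)]
  congr 1
  funext j
  rw [tsum_eq_sum (s := range 2)]
  · simp [sum_range_succ]
  · intro i hi
    have hi : 2 ≤ i := by simp at hi; omega
    rw [if_neg (by omega), if_neg (by omega)]; simp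

/-- Length of the part of `[F j, F (j+1)]` above `s`. -/
noncomputable def ee (F : ℕ → ℝ) (s : ℝ) (j : ℕ) : ℝ := max (F (j + 1)) s - max (F j) s

theorem ee_sum (F : ℕ → ℝ) (s : ℝ) (N : ℕ) :
    ∑ j ∈ range N, ee F s j = max (F N) s - max (F 0) s :=
  Finset.sum_range_sub (fun j => max (F j) s) N

theorem ee_nonneg {F : ℕ → ℝ} (hF : Monotone F) (s : ℝ) (j : ℕ) : 0 ≤ ee F s j :=
  sub_nonneg.2 (max_le_max (hF (Nat.le_succ j)) le_rfl)

theorem ee_anti {F : ℕ → ℝ} (hF : Monotone F) {s t : ℝ} (h : s ≤ t) (j : ℕ) :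
    ee F t j ≤ ee F s j := by
  have := hF (Nat.le_succ j)
  simp only [Nat.succ_eq_add_one] at this
  unfold ee
  rcases max_cases (F (j + 1)) t with h1 | h1 <;> rcases max_cases (F (j + 1)) s with h2 | h2 <;>
  rcases max_cases (F j) t with h3 | h3 <;> rcases max_cases (F j) s with h4 | h4 <;> linarith

theorem ee_above {F : ℕ → ℝ} (hF : Monotone F) {s : ℝ} {j : ℕ} (h : s ≤ F j) :
    ee F s j = F (j + 1) - F j := by
  have := hF (Nat.le_succ j)
  unfold ee
  rw [max_eq_left h, max_eq_left (h.trans this)]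

noncomputable def ww (F : ℕ → ℝ) (s : ℝ) (N j : ℕ) : ℝ :=
  (if j < N then ee F s j else if j = N then 1 - F N else 0) / (1 - s)

theorem ww_weight {F : ℕ → ℝ} (hF : Monotone F) (F0 : F 0 = 0) (F1 : ∀ n, F n < 1) {s : ℝ}
    (hs0 : 0 ≤ s) (hs1 : s < 1) {N : ℕ} (hN : s ≤ F N) : IsWeight (ww F s N) := by
  have hp : 0 < 1 - s := by linarith
  apply isWeight_of_fin (N + 1)
  · intro i
    apply div_nonneg _ hp.le
    split_ifs
    · exact ee_nonneg hF _ _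
    · linarith [F1 N]
    · exact le_rfl
  · intro i hi
    unfold ww
    rw [if_neg (by omega), if_neg (by omega), zero_div]
  · unfold ww
    rw [← sum_div, sum_range_succ]
    have : ∑ j ∈ range N, (if j < N then ee F s j else if j = N then 1 - F N else 0)
        = ∑ j ∈ range N, ee F s j :=
      sum_congr rfl (fun j hj => if_pos (by simpa using hj))
    rw [this, ee_sum, F0, max_eq_left hN, max_eq_right hs0]
    simp only [lt_irrefl, if_false, if_true]
    field_simp
    ring

def zz (x y : ℕ → X) (N j : ℕ) : X := if j < N then y j else x N

theorem ww_step {F lam : ℕ → ℝ} (hF : Monotone F) (F0 : F 0 = 0) (F1 : ∀ n, F n < 1)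
    (hl : ∀ i, 0 < lam i ∧ lam i < 1) (hlF : ∀ n, F (n + 1) - F n = lam n * (1 - F n))
    {x y : ℕ → X} (hx : ∀ i, x i = S.pair (lam i) (y i) (x (i + 1)))
    {s : ℝ} (hs0 : 0 ≤ s) (hs1 : s < 1) {N : ℕ} (hN : s ≤ F N) :
    S.comb (ww F s N) (zz x y N) = S.comb (ww F s (N + 1)) (zz x y (N + 1)) := by
  let κ : ℕ → ℝ := fun j => lam N * dl N j + (1 - lam N) * dl (N + 1) j
  have hκ : IsWeight κ := mix_weight (dl_weight _) (dl_weight _) (hl N).1.le (hl N).2.le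
  have hxN : x N = S.comb κ (zz x y (N + 1)) := by
    rw [hx N, ← pair_comb S (dl_weight _) (dl_weight _) (hl N).1.le (hl N).2.le, comb_dl, comb_dl]
    simp [zz]
  let m : ℕ → ℕ → ℝ := fun i => if i < N then dl i else κ
  have hm : ∀ i, IsWeight (m i) := by
    intro i; simp only [m]; split_ifs
    · exact dl_weight _
    · exact hκ
  have hz : zz x y N = fun i => S.comb (m i) (zz x y (N + 1)) := by
    funext i
    by_cases hi : i < N
    · simp only [m, hi, if_true]
      rw [comb_dl]
      simp [zz, hi, Nat.lt_succ_of_lt hi]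
    · simp only [m, hi, if_false]
      rw [← hxN]; simp [zz, hi]
  conv_lhs => rw [hz]
  rw [S.compos _ (ww_weight hF F0 F1 hs0 hs1 hN) m hm]
  congr 1
  funext j
  rw [tsum_eq_sum (s := range (N + 1))]
  · rw [sum_range_succ]
    have h1 : ∑ i ∈ range N, ww F s N i * m i j = if j < N then ww F s N j else 0 := by
      have : ∀ i ∈ range N, ww F s N i * m i j = if j = i then ww F s N i else 0 := by
        intro i hi
        have hi : i < N := by simpa using hi
        simp [m, hi, dl]
      rw [sum_congr rfl this, sum_ite_eq]
      simp
    rw [h1]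
    have h2 : m N = κ := by simp [m]
    rw [h2]
    simp only [κ, dl, ww]
    have hee := ee_above hF hN
    have hlN := hlF N
    rcases lt_trichotomy j N with h | h | h
    · have a1 : j < N + 1 := by omega
      have a2 : j ≠ N := by omega
      have a3 : j ≠ N + 1 := by omega
      simp [h, a1, a2, a3]
    · subst h
      simp [hee, hlN]
      ring
    · have a0 : ¬ j < N := by omega
      have a1 : ¬ j < N + 1 := by omega
      have a2 : j ≠ N := by omega
      by_cases a3 : j = N + 1
      · subst a3
        simp
        have : 1 - F (N + 1) = (1 - F N) * (1 - lam N) := by linarith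
        rw [this]; ring
      · simp [a0, a1, a2, a3]
  · intro i hi
    have hi : N + 1 ≤ i := by simpa using hi
    unfold ww
    rw [if_neg (by omega), if_neg (by omega)]; simp

theorem ww_indep {F lam : ℕ → ℝ} (hF : Monotone F) (F0 : F 0 = 0) (F1 : ∀ n, F n < 1)
    (hl : ∀ i, 0 < lam i ∧ lam i < 1) (hlF : ∀ n, F (n + 1) - F n = lam n * (1 - F n))
    {x y : ℕ → X} (hx : ∀ i, x i = S.pair (lam i) (y i) (x (i + 1)))
    {s : ℝ} (hs0 : 0 ≤ s) (hs1 : s < 1) {N M : ℕ} (hN : s ≤ F N) (hNM : N ≤ M) :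
    S.comb (ww F s N) (zz x y N) = S.comb (ww F s M) (zz x y M) := by
  induction M, hNM using Nat.le_induction with
  | base => rfl
  | succ M h ih =>
    rw [ih]
    exact ww_step S hF F0 F1 hl hlF hx hs0 hs1 (hN.trans (hF h))

noncomputable def ss (k : ℕ) : ℝ := 1 - (1 / 2) ^ k

noncomputable def yw (F : ℕ → ℝ) (k j : ℕ) : ℝ := 2 ^ (k + 1) * (ee F (ss k) j - ee F (ss (k + 1)) j)

theorem ss_nonneg (k : ℕ) : 0 ≤ ss k := by
  have : (1 / 2 : ℝ) ^ k ≤ 1 := pow_le_one₀ (by norm_num) (by norm_num)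
  unfold ss; linarith

theorem ss_lt (k : ℕ) : ss k < 1 := by
  have : (0 : ℝ) < (1 / 2 : ℝ) ^ k := by positivity
  unfold ss; linarith

theorem ss_le (k : ℕ) : ss k ≤ ss (k + 1) := by
  have : (0 : ℝ) < (1 / 2 : ℝ) ^ k := by positivity
  unfold ss; rw [pow_succ]; linarith

theorem yw_zero {F : ℕ → ℝ} (hF : Monotone F) {k N j : ℕ} (hN : ss (k + 1) ≤ F N) (hj : N ≤ j) :
    yw F k j = 0 := by
  have h := hN.trans (hF hj)
  unfold yw
  rw [ee_above hF h, ee_above hF ((ss_le k).trans h)]; simp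

theorem yw_weight {F : ℕ → ℝ} (hF : Monotone F) (F0 : F 0 = 0) {k N : ℕ}
    (hN : ss (k + 1) ≤ F N) : IsWeight (yw F k) := by
  apply isWeight_of_fin N
  · intro j
    exact mul_nonneg (by positivity) (sub_nonneg.2 (ee_anti hF (ss_le k) j))
  · intro j hj; exact yw_zero hF hN hj
  · unfold yw
    rw [← mul_sum, sum_sub_distrib, ee_sum, ee_sum, F0, max_eq_left hN,
      max_eq_left ((ss_le k).trans hN), max_eq_right (ss_nonneg _), max_eq_right (ss_nonneg _)]
    unfold ss
    have : (2 : ℝ) ^ k * (1 / 2) ^ k = 1 := by rw [← mul_pow]; norm_num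
    rw [pow_succ, pow_succ]
    linear_combination this

theorem main {F lam : ℕ → ℝ} (hF : Monotone F) (F0 : F 0 = 0) (F1 : ∀ n, F n < 1)
    (hl : ∀ i, 0 < lam i ∧ lam i < 1) (hlF : ∀ n, F (n + 1) - F n = lam n * (1 - F n))
    (hlim : Tendsto F atTop (𝓝 1))
    {x y : ℕ → X} (hx : ∀ i, x i = S.pair (lam i) (y i) (x (i + 1)))
    (H : ∀ x y : ℕ → X, (∀ i, x i = S.pair (1 / 2) (y i) (x (i + 1))) →
        x 0 = S.comb (fun i => (1 / 2 : ℝ) ^ (i + 1)) y) :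
    x 0 = S.comb (fun i => F (i + 1) - F i) y := by
  have hex : ∀ k, ∃ N, ss k ≤ F N := fun k =>
    ((hlim.eventually (lt_mem_nhds (ss_lt k))).exists).imp (fun _ h => le_of_lt h)
  choose N hN using hex
  have key := H (fun k => S.comb (ww F (ss k) (N k)) (zz x y (N k)))
    (fun k => S.comb (yw F k) y) ?_
  · have h0 : ss 0 = 0 := by simp [ss]
    have e0 : S.comb (ww F (ss 0) (N 0)) (zz x y (N 0)) = x 0 := by
      rw [← ww_indep S hF F0 F1 hl hlF hx (ss_nonneg 0) (ss_lt 0) (N := 0) (by rw [h0, F0])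
        (Nat.zero_le _)]
      have : ww F (ss 0) 0 = dl 0 := by
        funext j; simp [ww, dl, h0, F0]
      rw [this, comb_dl]; simp [zz]
    rw [← e0, key, S.compos]
    · congr 1
      funext j
      have ht : ∀ k, (1 / 2 : ℝ) ^ (k + 1) * yw F k j = ee F (ss k) j - ee F (ss (k + 1)) j := by
        intro k
        unfold yw
        have : (2 : ℝ) ^ (k + 1) * (1 / 2) ^ (k + 1) = 1 := by rw [← mul_pow]; norm_num
        linear_combination (ee F (ss k) j - ee F (ss (k + 1)) j) * this
      simp_rw [ht]
      apply HasSum.tsum_eq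
      rw [hasSum_iff_tendsto_nat_of_nonneg
        (fun k => sub_nonneg.2 (ee_anti hF (ss_le k) j))]
      simp_rw [Finset.sum_range_sub' (fun k => ee F (ss k) j)]
      have hss : Tendsto ss atTop (𝓝 1) := by
        have := (tendsto_pow_atTop_nhds_zero_of_lt_one (r := (1 / 2 : ℝ)) (by norm_num)
          (by norm_num)).const_sub 1
        rw [sub_zero] at this
        exact this
      have hz : ∀ᶠ k in atTop, ee F (ss 0) j - ee F (ss k) j = F (j + 1) - F j := by
        filter_upwards [hss.eventually (lt_mem_nhds (F1 j)),
          hss.eventually (lt_mem_nhds (F1 (j + 1)))] with k h1 h2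
        have hj : ss 0 ≤ F j := by rw [h0, ← F0]; exact hF (Nat.zero_le j)
        rw [ee_above hF hj]
        unfold ee
        rw [max_eq_right h1.le, max_eq_right h2.le]; ring
      exact tendsto_const_nhds.congr' (hz.mono fun k h => h.symm)
    · apply isWeight_of_hasSum
      · intro i; positivity
      · have := hasSum_geometric_two' (1 : ℝ)
        convert this using 1
        funext i
        rw [pow_succ, one_div, inv_pow]
        field_simp
    · intro k; exact yw_weight hF F0 (hN (k + 1))
  · intro k
    let M := max (N k) (N (k + 1))
    have hM0 : ss k ≤ F M := (hN k).trans (hF (le_max_left _ _))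
    have hM1 : ss (k + 1) ≤ F M := (hN (k + 1)).trans (hF (le_max_right _ _))
    rw [ww_indep S hF F0 F1 hl hlF hx (ss_nonneg k) (ss_lt k) (hN k) (le_max_left _ (N (k + 1))),
      ww_indep S hF F0 F1 hl hlF hx (ss_nonneg (k + 1)) (ss_lt (k + 1)) (hN (k + 1))
        (le_max_right (N k) _)]
    change S.comb (ww F (ss k) M) (zz x y M) = S.pair (1 / 2) _ (S.comb (ww F (ss (k + 1)) M)
      (zz x y M))
    have hY : S.comb (yw F k) y = S.comb (yw F k) (zz x y M) := by
      apply comb_congr S (yw_weight hF F0 hM1)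
      intro j hj
      have : j < M := by
        by_contra hc
        exact hj (yw_zero hF hM1 (not_lt.1 hc))
      simp [zz, this]
    rw [hY, pair_comb S (yw_weight hF F0 hM1) (ww_weight hF F0 F1 (ss_nonneg _) (ss_lt _) hM1)
      (by norm_num) (by norm_num)]
    congr 1
    funext j
    have q1 : ∀ a : ℝ, ∀ k, a / (1 - ss k) = a * 2 ^ k := by
      intro a k
      simp [ss]
    have hyz := yw_zero hF (j := j) hM1
    unfold ww
    rw [q1, q1]
    by_cases hj : j < M
    · simp only [hj, if_true, yw]
      rw [pow_succ]; ring
    · rw [hyz (not_lt.1 hj)]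
      simp only [hj, if_false]
      rw [pow_succ]; ring

end SCProof

/-- A superconvex set is iterative iff it satisfies the special case of iterativity
with all weights equal to 1/2. -/
theorem superconvex_iterative_iff_half (X : Type) (S : SuperconvexStr X) :
    S.Iterative ↔
      ∀ x y : ℕ → X, (∀ i, x i = S.pair (1 / 2) (y i) (x (i + 1))) →
        x 0 = S.comb (fun i => (1 / 2 : ℝ) ^ (i + 1)) y := by
  constructor
  · intro h x y hx
    have := h x y (fun _ => 1 / 2) (fun _ => 1 / 2) (fun _ => by norm_num) (fun _ => by norm_num)
      (fun _ => by norm_num) hx (by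
        simp only [Finset.prod_const, Finset.card_range]
        exact tendsto_pow_atTop_nhds_zero_of_lt_one (by norm_num) (by norm_num))
    rw [this]
    congr 1
    funext i
    simp only [Finset.prod_const, Finset.card_range]
    rw [pow_succ]; ring
  · intro H x y lam mu hl hm hlm hx hlim
    let F : ℕ → ℝ := fun n => 1 - ∏ j ∈ Finset.range n, mu j
    have hpos : ∀ n, 0 < ∏ j ∈ Finset.range n, mu j := fun n =>
      Finset.prod_pos (fun i _ => (hm i).1)
    have hlF : ∀ n, F (n + 1) - F n = lam n * (1 - F n) := by
      intro n
      simp only [F, Finset.prod_range_succ]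
      linear_combination (-∏ j ∈ Finset.range n, mu j) * hlm n
    have hF1 : ∀ n, F n < 1 := fun n => by simp only [F]; linarith [hpos n]
    have hF : Monotone F := monotone_nat_of_le_succ (fun n => by
      have := mul_pos (hl n).1 (sub_pos.2 (hF1 n))
      linarith [hlF n])
    have := SCProof.main S hF (by simp [F]) hF1 hl hlF (by
      have := hlim.const_sub 1
      simpa [F] using this) hx H
    rw [this]
    congr 1
    funext i
    rw [hlF]; simp [F]
end

section
/- Let (X, m) be an iterative midpoint set. Then there exists exactly one superconvex structure Σ' on the set X such that ½·x + ½·y = m(x,y) for all x, y ∈ X. Moreover this superconvex structure is iterative, and if (X, m) is cancellative then the superconvex structure is cancellative. -/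
/-- A midpoint operation: idempotent, commutative, satisfying transposition. -/
def IsMidpoint {A : Type} (m : A → A → A) : Prop :=
  (∀ x, m x x = x) ∧ (∀ x y, m x y = m y x) ∧
    (∀ x y z w, m (m x y) (m z w) = m (m x z) (m y w))

/-- Cancellation: `m x y = m x z` implies `y = z`. -/
def Cancellative {A : Type} (m : A → A → A) : Prop :=
  ∀ x y z, m x y = m x z → y = z

/-- Iterativity in the category of sets. -/
def Iterative {A : Type} (m : A → A → A) : Prop :=
  ∀ (X : Type) (c : X → A × X), ∃! u : X → A, ∀ x, u x = m (c x).1 (u (c x).2)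

/-- The unfolding property of an infinitary operation `M` with respect to `m`. -/
def Unfolding {A : Type} (m : A → A → A) (M : (ℕ → A) → A) : Prop :=
  ∀ x : ℕ → A, M x = m (x 0) (M fun i => x (i + 1))

/-- The canonicity property of an infinitary operation `M` with respect to `m`. -/
def Canonicity {A : Type} (m : A → A → A) (M : (ℕ → A) → A) : Prop :=
  ∀ x y : ℕ → A, (∀ i, y i = m (x i) (y (i + 1))) → y 0 = M x

/-- `Mean m n s a`: `a` is the mean of the multiset `s` of size `2^n`. -/
inductive MeanRel {A : Type} (m : A → A → A) : ℕ → Multiset A → A → Prop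
  | one (a : A) : MeanRel m 0 {a} a
  | mid {n : ℕ} {s t : Multiset A} {a b : A} (hs : MeanRel m n s a) (ht : MeanRel m n t b) :
      MeanRel m (n + 1) (s + t) (m a b)

namespace MeanRel

variable {A : Type} {m : A → A → A}

theorem card {n : ℕ} {s : Multiset A} {a : A} (h : MeanRel m n s a) : s.card = 2 ^ n := by
  induction h with
  | one a => simp
  | mid _ _ h1 h2 => rw [Multiset.card_add, h1, h2, pow_succ]; ring

theorem exists_sub (s : Multiset A) (k : ℕ) (h : k ≤ s.card) :
    ∃ t u, s = t + u ∧ t.card = k := by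
  induction s using Quotient.inductionOn with
  | h l =>
    refine ⟨(l.take k : List A), (l.drop k : List A), ?_, ?_⟩
    · rw [Multiset.coe_add, List.take_append_drop]; rfl
    · have : k ≤ l.length := by simpa using h
      simpa using this

theorem total (n : ℕ) (s : Multiset A) (h : s.card = 2 ^ n) : ∃ a, MeanRel m n s a := by
  induction n generalizing s with
  | zero =>
    obtain ⟨a, rfl⟩ := Multiset.card_eq_one.1 (by simpa using h)
    exact ⟨a, one a⟩
  | succ n ih =>
    obtain ⟨t, u, rfl, ht⟩ := exists_sub s (2 ^ n) (by rw [h, pow_succ]; omega)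
    obtain ⟨a, ha⟩ := ih t ht
    obtain ⟨b, hb⟩ := ih u (by rw [Multiset.card_add, pow_succ] at h; omega)
    exact ⟨_, mid ha hb⟩

theorem riesz (a b w v : Multiset A) (h : w + v = a + b) :
    ∃ a1 a2 b1 b2, a = a1 + a2 ∧ b = b1 + b2 ∧ w = a1 + b1 ∧ v = a2 + b2 := by
  classical
  refine ⟨a ∩ w, a - a ∩ w, w - a ∩ w, b - (w - a ∩ w), ?_, ?_, ?_, ?_⟩ <;>
  · ext i
    have := congrArg (Multiset.count i) h
    simp only [Multiset.count_add, Multiset.count_sub, Multiset.count_inter] at this ⊢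
    omega

theorem split (hm : IsMidpoint m) (n : ℕ) (a b : Multiset A) (v : A)
    (h : MeanRel m (n + 1) (a + b) v) (ha : a.card = 2 ^ n) (hb : b.card = 2 ^ n) :
    ∃ y z, MeanRel m n a y ∧ MeanRel m n b z ∧ v = m y z := by
  obtain ⟨-, hcomm, htr⟩ := hm
  induction n generalizing a b v with
  | zero =>
    obtain ⟨a0, rfl⟩ := Multiset.card_eq_one.1 (by simpa using ha)
    obtain ⟨b0, rfl⟩ := Multiset.card_eq_one.1 (by simpa using hb)
    generalize hc : ({a0} + {b0} : Multiset A) = c at h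
    cases h with
    | mid h1 h2 =>
      cases h1; cases h2
      rename_i p q
      have : (a0 ::ₘ {b0} : Multiset A) = p ::ₘ {q} := by simpa using hc
      rw [Multiset.cons_eq_cons] at this
      rcases this with ⟨rfl, h⟩ | ⟨hne, cs, h1, h2⟩
      · obtain rfl := Multiset.singleton_inj.1 h
        exact ⟨_, _, one _, one _, rfl⟩
      · have e1 := (Multiset.singleton_eq_cons_iff _).1 h1
        have e2 := (Multiset.singleton_eq_cons_iff _).1 h2
        obtain ⟨rfl, -⟩ := e1
        obtain ⟨rfl, -⟩ := e2
        exact ⟨_, _, one _, one _, hcomm _ _⟩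
  | succ n ih =>
    have key : ∀ (a1 a2 b1 b2 : Multiset A) (v1 v2 : A), a = a1 + a2 → b = b1 + b2 →
        MeanRel m (n + 1) (a1 + b1) v1 → MeanRel m (n + 1) (a2 + b2) v2 → 2 ^ n ≤ a1.card →
        ∃ y z, MeanRel m (n + 1) a y ∧ MeanRel m (n + 1) b z ∧ m v1 v2 = m y z := by
      rintro a1 a2 b1 b2 v1 v2 rfl rfl h1 h2 hle
      have c1 := h1.card
      have c2 := h2.card
      obtain ⟨p, q, rfl, hp⟩ := exists_sub a1 (2 ^ n) hle
      obtain ⟨r, s, rfl, hr⟩ := exists_sub b2 (2 ^ n) (by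
        simp only [Multiset.card_add, pow_succ] at *; omega)
      simp only [Multiset.card_add, pow_succ] at c1 c2 ha hb
      have e1 : p + q + b1 = p + (q + b1) := by abel
      have e2 : a2 + (r + s) = r + (s + a2) := by abel
      rw [e1] at h1
      rw [e2] at h2
      obtain ⟨P, Q, hP, hQ, rfl⟩ := ih _ _ _ h1 hp (by rw [Multiset.card_add]; omega)
      obtain ⟨R, S, hR, hS, rfl⟩ := ih _ _ _ h2 hr (by rw [Multiset.card_add]; omega)
      have h3 := mid hQ hS
      have e3 : q + b1 + (s + a2) = (q + a2) + (s + b1) := by abel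
      rw [e3] at h3
      obtain ⟨Q', S', hQ', hS', e⟩ := ih _ _ _ h3 (by rw [Multiset.card_add]; omega)
        (by rw [Multiset.card_add]; omega)
      refine ⟨m P Q', m R S', ?_, ?_, ?_⟩
      · have := mid hP hQ'
        rwa [← add_assoc] at this
      · have := mid hR hS'
        have e4 : r + (s + b1) = b1 + (r + s) := by abel
        rwa [e4] at this
      · rw [htr, e, htr]
    generalize hc : a + b = c at h
    cases h with
    | mid h1 h2 =>
      rename_i w1 w2 v1 v2
      obtain ⟨a1, a2, b1, b2, ea, eb, rfl, rfl⟩ := riesz a b w1 w2 hc.symm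
      by_cases hle : 2 ^ n ≤ a1.card
      · exact key a1 a2 b1 b2 v1 v2 ea eb h1 h2 hle
      · rw [hcomm v1 v2]
        refine key a2 a1 b2 b1 v2 v1 (by rw [ea, add_comm]) (by rw [eb, add_comm]) h2 h1 ?_
        rw [ea, Multiset.card_add, pow_succ] at ha
        omega

theorem unique (hm : IsMidpoint m) {n : ℕ} {s : Multiset A} {a b : A}
    (h1 : MeanRel m n s a) (h2 : MeanRel m n s b) : a = b := by
  induction h1 generalizing b with
  | one a =>
    generalize hc : ({a} : Multiset A) = c at h2
    cases h2
    exact Multiset.singleton_inj.1 hc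
  | mid h3 h4 ih1 ih2 =>
    obtain ⟨y, z, hy, hz, rfl⟩ := split hm _ _ _ _ h2 h3.card h4.card
    rw [ih1 hy, ih2 hz]

theorem raise (hm : IsMidpoint m) {n : ℕ} {s : Multiset A} {a : A}
    (h : MeanRel m n s a) (k : ℕ) : MeanRel m (n + k) (2 ^ k • s) a := by
  induction k with
  | zero => simpa using h
  | succ k ih =>
    have := mid ih ih
    rw [hm.1, ← two_nsmul, ← mul_nsmul, ← pow_succ] at this
    exact this

theorem closed {P : A → Prop} (hP : ∀ a b, P a → P b → P (m a b)) {n : ℕ} {s : Multiset A} {a : A}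
    (h : MeanRel m n s a) : (∀ b ∈ s, P b) → P a := by
  induction h with
  | one a => intro h; exact h a (by simp)
  | mid _ _ ih1 ih2 =>
    intro h
    exact hP _ _ (ih1 fun b hb => h b (by simp [hb])) (ih2 fun b hb => h b (by simp [hb]))

end MeanRel

theorem Iterative.canon {X : Type} {m : X → X → X} (hit : Iterative m) (u v a : ℕ → X)
    (hu : ∀ k, u k = m (a k) (u (k + 1))) (hv : ∀ k, v k = m (a k) (v (k + 1))) : u = v :=
  (hit ℕ fun k => (a k, k + 1)).unique hu hv

theorem IsWeight.hasSum {l : ℕ → ℝ} (h : IsWeight l) : HasSum l 1 := by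
  have : Summable l := by
    by_contra hn
    have := tsum_eq_zero_of_not_summable hn
    rw [h.2] at this
    norm_num at this
  rw [← h.2]
  exact this.hasSum

theorem IsWeight.of {l : ℕ → ℝ} (h : ∀ i, 0 ≤ l i) (hs : HasSum l 1) : IsWeight l :=
  ⟨h, hs.tsum_eq⟩

theorem IsWeight.single (k : ℕ) : IsWeight (Pi.single k 1) := by
  refine .of (fun i => ?_) (hasSum_pi_single k (1 : ℝ))
  by_cases h : i = k
  · subst h; simp
  · simp [h]

theorem IsWeight.le_one {l : ℕ → ℝ} (h : IsWeight l) (i : ℕ) : l i ≤ 1 := by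
  rw [← h.2]
  exact h.hasSum.summable.le_tsum i fun j _ => h.1 j

theorem IsWeight.mix {l k : ℕ → ℝ} (hl : IsWeight l) (hk : IsWeight k) (t : ℝ) (h0 : 0 ≤ t)
    (h1 : t ≤ 1) : IsWeight (fun i => t * l i + (1 - t) * k i) := by
  refine .of (fun i => ?_) ?_
  · have := hl.1 i
    have := hk.1 i
    have : 0 ≤ 1 - t := by linarith
    positivity
  · have := (hl.hasSum.mul_left t).add (hk.hasSum.mul_left (1 - t))
    simpa using this

theorem IsWeight.comp {l : ℕ → ℝ} (hl : IsWeight l) {mu : ℕ → ℕ → ℝ} (hmu : ∀ i, IsWeight (mu i)) :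
    IsWeight (fun j => ∑' i, l i * mu i j) := by
  have h0 : ∀ p : ℕ × ℕ, 0 ≤ l p.1 * mu p.1 p.2 := fun p => mul_nonneg (hl.1 _) ((hmu _).1 _)
  have h1 : ∀ i, ∑' j, l i * mu i j = l i := fun i => by rw [tsum_mul_left, (hmu i).2, mul_one]
  have hs : Summable (fun p : ℕ × ℕ => l p.1 * mu p.1 p.2) := by
    refine (summable_prod_of_nonneg h0).2 ⟨fun i => (hmu i).hasSum.summable.mul_left (l i), ?_⟩
    exact (summable_congr h1).2 hl.hasSum.summable
  refine ⟨fun j => tsum_nonneg fun i => h0 (i, j), ?_⟩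
  have h2 : ∑' j, ∑' i, l i * mu i j = ∑' i, ∑' j, l i * mu i j :=
    Summable.tsum_comm (f := fun i j => l i * mu i j) hs
  rw [h2]
  simp only [h1, hl.2]

theorem IsWeight.summable_comp {l : ℕ → ℝ} (hl : IsWeight l) {mu : ℕ → ℕ → ℝ}
    (hmu : ∀ i, IsWeight (mu i)) (j : ℕ) : Summable (fun i => l i * mu i j) := by
  refine Summable.of_nonneg_of_le (fun i => mul_nonneg (hl.1 _) ((hmu _).1 _)) (fun i => ?_)
    hl.hasSum.summable
  exact mul_le_of_le_one_right (hl.1 _) ((hmu i).le_one j)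

/-- every weight dominates, with slack, half of a dyadic weight -/
theorem IsWeight.dyadic {l : ℕ → ℝ} (h : IsWeight l) : ∃ (n : ℕ) (c : Multiset ℕ),
    c.card = 2 ^ n ∧ ∀ i ∈ c, (c.count i : ℝ) < l i * 2 ^ (n + 1) := by
  have ht := h.hasSum.tendsto_sum_nat
  obtain ⟨K, hK⟩ := (ht.eventually (lt_mem_nhds (show (3 / 4 : ℝ) < 1 by norm_num))).exists
  obtain ⟨n, hn⟩ := pow_unbounded_of_one_lt (4 * K : ℝ) (show (1 : ℝ) < 2 by norm_num)
  let k : ℕ → ℕ := fun i => ⌈l i * 2 ^ (n + 1)⌉₊ - 1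
  let C : Multiset ℕ := ∑ i ∈ Finset.range K, k i • {i}
  have hC : 2 ^ n ≤ C.card := by
    have : (2 ^ n : ℝ) ≤ C.card := by
      simp only [C, Multiset.card_sum, Multiset.card_nsmul, Multiset.card_singleton, mul_one]
      push_cast
      have h1 : ∑ i ∈ Finset.range K, (l i * 2 ^ (n + 1) - 1) ≤ ∑ i ∈ Finset.range K, (k i : ℝ) := by
        refine Finset.sum_le_sum fun i _ => ?_
        have h2 := Nat.le_ceil (l i * 2 ^ (n + 1))
        have h3 : ⌈l i * 2 ^ (n + 1)⌉₊ ≤ k i + 1 := by simp only [k]; omega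
        have h4 : (⌈l i * 2 ^ (n + 1)⌉₊ : ℝ) ≤ k i + 1 := by exact_mod_cast h3
        linarith
      refine le_trans ?_ h1
      rw [Finset.sum_sub_distrib, ← Finset.sum_mul]
      simp only [Finset.sum_const, Finset.card_range, nsmul_eq_mul, mul_one, pow_succ]
      have : (0 : ℝ) < 2 ^ n := by positivity
      nlinarith
    exact_mod_cast this
  have hcount : ∀ i, C.count i ≤ k i := by
    intro i
    simp only [C, Multiset.count_sum', Multiset.count_nsmul, Multiset.count_singleton]
    simp only [mul_ite, mul_one, mul_zero, Finset.sum_ite_eq]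
    split_ifs <;> omega
  obtain ⟨c, c', hc', hcard⟩ := MeanRel.exists_sub C _ hC
  have hc : c ≤ C := by rw [hc']; exact Multiset.le_add_right _ _
  refine ⟨n, c, hcard, fun i hi => ?_⟩
  have h1 : c.count i ≤ k i := (Multiset.count_le_of_le i hc).trans (hcount i)
  have h2 : 0 < c.count i := Multiset.count_pos.2 hi
  have h3 : c.count i < ⌈l i * 2 ^ (n + 1)⌉₊ := by simp only [k] at h1; omega
  exact Nat.lt_ceil.1 h3

/-- midpoint operation on weights paired with points -/
noncomputable def pairMid {X : Type} (m : X → X → X) (p q : (ℕ → ℝ) × X) : (ℕ → ℝ) × X :=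
  (fun i => (1 / 2) * p.1 i + (1 - 1 / 2) * q.1 i, m p.2 q.2)

theorem pairMid_isMidpoint {X : Type} {m : X → X → X} (hm : IsMidpoint m) :
    IsMidpoint (pairMid m) := by
  obtain ⟨h1, h2, h3⟩ := hm
  refine ⟨fun p => ?_, fun p q => ?_, fun p q r s => ?_⟩
  · refine Prod.ext (funext fun i => ?_) (h1 _)
    simp only [pairMid]; ring
  · refine Prod.ext (funext fun i => ?_) (h2 _ _)
    simp only [pairMid]; ring
  · refine Prod.ext (funext fun i => ?_) (h3 _ _ _ _)
    simp only [pairMid]; ring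

/-- The graph of the evaluation map from weights to points. -/
inductive EvalGraph {X : Type} (m : X → X → X) (x : ℕ → X) : (ℕ → ℝ) × X → Prop
  | gen (i : ℕ) : EvalGraph m x (Pi.single i 1, x i)
  | mid {p q : (ℕ → ℝ) × X} (hp : EvalGraph m x p) (hq : EvalGraph m x q) : EvalGraph m x (pairMid m p q)
  | lim (p q : ℕ → (ℕ → ℝ) × X) (hq : ∀ k, EvalGraph m x (q k)) (hw : ∀ k, IsWeight (p k).1)
      (h : ∀ k, p k = pairMid m (q k) (p (k + 1))) (j : ℕ) : EvalGraph m x (p j)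

/-- generators of the graph -/
noncomputable def genPt {X : Type} (x : ℕ → X) (i : ℕ) : (ℕ → ℝ) × X := (Pi.single i 1, x i)

theorem EvalGraph.weight {X : Type} {m : X → X → X} {x : ℕ → X} {p : (ℕ → ℝ) × X}
    (h : EvalGraph m x p) : IsWeight p.1 := by
  induction h with
  | gen i => exact .single i
  | mid _ _ h1 h2 => exact h1.mix h2 _ (by norm_num) (by norm_num)
  | lim p q _ hw _ j => exact hw j

/-- approximability by dyadic weights -/
def Approx {X : Type} (m : X → X → X) (x : ℕ → X) (e : ℝ) (p : (ℕ → ℝ) × X) : Prop :=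
  ∃ (N : ℕ) (s : Multiset ℕ) (t : Multiset ((ℕ → ℝ) × X)),
    (t.card : ℝ) ≤ e * 2 ^ N ∧ (∀ a ∈ t, EvalGraph m x a) ∧
      MeanRel (pairMid m) N (s.map (genPt x) + t) p

theorem Approx.raise {X : Type} {m : X → X → X} (hm : IsMidpoint m) {x : ℕ → X} {e : ℝ}
    {p : (ℕ → ℝ) × X} (h : Approx m x e p) : ∃ N0, ∀ k, 
    ∃ (s : Multiset ℕ) (t : Multiset ((ℕ → ℝ) × X)),
    (t.card : ℝ) ≤ e * 2 ^ (N0 + k) ∧ (∀ a ∈ t, EvalGraph m x a) ∧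
      MeanRel (pairMid m) (N0 + k) (s.map (genPt x) + t) p := by
  obtain ⟨N, s, t, h1, h2, h3⟩ := h
  refine ⟨N, fun k => ⟨2 ^ k • s, 2 ^ k • t, ?_, ?_, ?_⟩⟩
  · rw [Multiset.card_nsmul, pow_add]
    push_cast
    have : (0 : ℝ) < 2 ^ k := by positivity
    nlinarith
  · intro a ha
    exact h2 a (Multiset.mem_of_mem_nsmul ha)
  · rw [Multiset.map_nsmul, ← nsmul_add]
    exact h3.raise (pairMid_isMidpoint hm) k

theorem Approx.mid {X : Type} {m : X → X → X} (hm : IsMidpoint m) {x : ℕ → X} {e e' : ℝ}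
    {p q : (ℕ → ℝ) × X} (hp : Approx m x e p) (hq : Approx m x e' q) :
    Approx m x ((e + e') / 2) (pairMid m p q) := by
  obtain ⟨N, h1⟩ := hp.raise hm
  obtain ⟨N', h2⟩ := hq.raise hm
  obtain ⟨s, t, a1, a2, a3⟩ := h1 N'
  obtain ⟨s', t', b1, b2, b3⟩ := h2 N
  rw [add_comm N' N] at b1 b3
  refine ⟨N + N' + 1, s + s', t + t', ?_, ?_, ?_⟩
  · rw [Multiset.card_add, pow_succ]
    push_cast
    linarith
  · intro a ha
    rcases Multiset.mem_add.1 ha with h | h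
    · exact a2 a h
    · exact b2 a h
  · have := MeanRel.mid a3 b3
    rw [add_add_add_comm, ← Multiset.map_add] at this
    exact this

theorem EvalGraph.approx {X : Type} {m : X → X → X} (hm : IsMidpoint m) {x : ℕ → X}
    {p : (ℕ → ℝ) × X} (h : EvalGraph m x p) : ∀ e : ℝ, 0 < e → Approx m x e p := by
  induction h with
  | gen i =>
    intro e he
    refine ⟨0, {i}, 0, by simpa using he.le, by simp, ?_⟩
    have := MeanRel.one (m := pairMid m) (genPt x i)
    rw [Multiset.map_singleton, add_zero]
    exact this
  | mid _ _ h1 h2 =>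
    intro e he
    have := (h1 e he).mid hm (h2 e he)
    rwa [add_self_div_two] at this
  | lim p q hq hw h j ih =>
    intro e he
    have key : ∀ k i, Approx m x (e / 2 + (1 / 2) ^ k) (p i) := by
      intro k
      induction k with
      | zero =>
        intro i
        refine ⟨0, 0, {p i}, ?_, ?_, ?_⟩
        · simp; linarith
        · intro a ha
          rw [Multiset.mem_singleton.1 ha]
          exact .lim p q hq hw h i
        · simpa using MeanRel.one (m := pairMid m) (p i)
      | succ k ihk =>
        intro i
        rw [h i]
        convert (ih i (e / 2) (by linarith)).mid hm (ihk (i + 1)) using 1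
        rw [pow_succ]; ring
    obtain ⟨k, hk⟩ := exists_pow_lt_of_lt_one (show 0 < e / 2 by linarith)
      (show (1 / 2 : ℝ) < 1 by norm_num)
    obtain ⟨N, s, t, h1, h2, h3⟩ := key k j
    refine ⟨N, s, t, h1.trans ?_, h2, h3⟩
    have : (0 : ℝ) < 2 ^ N := by positivity
    nlinarith

theorem MeanRel.fst {X : Type} {m : X → X → X} {n : ℕ} {s : Multiset ((ℕ → ℝ) × X)}
    {p : (ℕ → ℝ) × X} (h : MeanRel (pairMid m) n s p) (i : ℕ) :
    p.1 i * 2 ^ n = (s.map fun a => a.1 i).sum := by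
  induction h with
  | one a => simp
  | mid _ _ h1 h2 =>
    rw [Multiset.map_add, Multiset.sum_add, ← h1, ← h2]
    simp only [pairMid]
    ring

theorem sum_gen {X : Type} (x : ℕ → X) (c : Multiset ℕ) (i : ℕ) :
    ((c.map (genPt x)).map fun a => a.1 i).sum = (c.count i : ℝ) := by
  induction c using Multiset.induction with
  | empty => simp
  | cons a c ih =>
    rw [Multiset.map_cons, Multiset.map_cons, Multiset.sum_cons, ih, Multiset.count_cons]
    by_cases h : i = a
    · subst h; simp [genPt]; ring
    · simp [genPt, h]

theorem EvalGraph.split {X : Type} {m : X → X → X} (hm : IsMidpoint m) {x : ℕ → X}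
    {p : (ℕ → ℝ) × X} (h : EvalGraph m x p) (n : ℕ) (c : Multiset ℕ) (hc : c.card = 2 ^ n)
    (hl : ∀ i ∈ c, (c.count i : ℝ) < p.1 i * 2 ^ (n + 1)) (y : (ℕ → ℝ) × X)
    (hy : MeanRel (pairMid m) n (c.map (genPt x)) y) :
    ∃ z, EvalGraph m x z ∧ p = pairMid m y z := by
  have hmm := pairMid_isMidpoint hm
  obtain ⟨e, he, hslack⟩ : ∃ e : ℝ, 0 < e ∧ ∀ i ∈ c, (c.count i : ℝ) ≤ (p.1 i - e) * 2 ^ (n + 1) := by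
    have : ∀ᶠ e in nhdsWithin (0 : ℝ) (Set.Ioi 0), ∀ i ∈ c.toFinset,
        (c.count i : ℝ) < (p.1 i - e) * 2 ^ (n + 1) := by
      rw [Filter.eventually_all_finset]
      intro i hi
      have ht : Filter.Tendsto (fun e : ℝ => (p.1 i - e) * 2 ^ (n + 1)) (nhdsWithin (0 : ℝ) (Set.Ioi 0))
          (nhds ((p.1 i - 0) * 2 ^ (n + 1))) := by
        refine Filter.Tendsto.mono_left ?_ nhdsWithin_le_nhds
        exact (Continuous.tendsto (by fun_prop) 0)
      refine ht.eventually (lt_mem_nhds ?_)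
      simpa using hl i (by simpa using hi)
    obtain ⟨e, h1, h2⟩ := (this.and self_mem_nhdsWithin).exists
    exact ⟨e, h2, fun i hi => (h1 i (by simpa using hi)).le⟩
  obtain ⟨N0, hN⟩ := (h.approx hm e he).raise hm
  obtain ⟨s, t, h1, h2, h3⟩ := hN (n + 1)
  have hle : 2 ^ N0 • c ≤ s := by
    rw [Multiset.le_iff_count]
    intro i
    rw [Multiset.count_nsmul]
    by_cases hi : i ∈ c
    · have e1 := h3.fst i
      rw [Multiset.map_add, Multiset.sum_add, sum_gen] at e1
      have e2 : (t.map fun a => a.1 i).sum ≤ (t.card : ℝ) := by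
        have := Multiset.sum_le_card_nsmul (t.map fun a => a.1 i) (1 : ℝ) (by
          intro r hr
          obtain ⟨a, ha, rfl⟩ := Multiset.mem_map.1 hr
          exact (h2 a ha).weight.le_one i)
        simpa using this
      have e3 := hslack i hi
      have e4 : (0 : ℝ) < 2 ^ N0 := by positivity
      have e5 : (2 ^ N0 * c.count i : ℝ) ≤ s.count i := by
        have := mul_le_mul_of_nonneg_left e3 e4.le
        rw [pow_add] at e1 h1
        nlinarith
      exact_mod_cast e5
    · rw [Multiset.count_eq_zero_of_notMem hi]; simp
  obtain ⟨r, rfl⟩ := Multiset.le_iff_exists_add.1 hle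
  rw [Multiset.map_add, add_assoc, Multiset.map_nsmul, ← add_assoc N0 n 1] at h3
  have hcard := h3.card
  rw [Multiset.card_add, Multiset.card_nsmul, Multiset.card_map, hc, ← pow_add, pow_succ] at hcard
  obtain ⟨y', z, hy', hz, e⟩ := MeanRel.split hmm _ _ _ _ h3
    (by rw [Multiset.card_nsmul, Multiset.card_map, hc, ← pow_add]) (by omega)
  have hyy := hy.raise hmm N0
  rw [add_comm] at hyy
  obtain rfl := hyy.unique hmm hy'
  refine ⟨z, hz.closed (P := EvalGraph m x) (fun a b => EvalGraph.mid) ?_, e⟩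
  intro b hb
  rcases Multiset.mem_add.1 hb with hb | hb
  · obtain ⟨i, -, rfl⟩ := Multiset.mem_map.1 hb
    exact .gen i
  · exact h2 b hb

theorem graph_exists {X : Type} {m : X → X → X} (hm : IsMidpoint m) (hit : Iterative m)
    (x : ℕ → X) : ∃ u : (ℕ → ℝ) → X, (∀ l, IsWeight l → EvalGraph m x (l, u l)) ∧
      ∀ p, EvalGraph m x p → p.2 = u p.1 := by
  have h1 : ∀ l : {l : ℕ → ℝ // IsWeight l}, ∃ (n : ℕ) (c : Multiset ℕ),
      c.card = 2 ^ n ∧ ∀ i ∈ c, (c.count i : ℝ) < l.1 i * 2 ^ (n + 1) := fun l => l.2.dyadic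
  choose n c hcard hc using h1
  have h2 : ∀ l, ∃ y, MeanRel (pairMid m) (n l) ((c l).map (genPt x)) y := fun l =>
    MeanRel.total _ _ (by rw [Multiset.card_map, hcard])
  choose E hE using h2
  have hEG : ∀ l, EvalGraph m x (E l) := fun l =>
    (hE l).closed (P := EvalGraph m x) (fun a b => EvalGraph.mid) (by
      intro b hb
      obtain ⟨i, -, rfl⟩ := Multiset.mem_map.1 hb
      exact .gen i)
  have hEle : ∀ l i, (E l).1 i ≤ 2 * l.1 i := by
    intro l i
    have e1 := (hE l).fst i
    rw [sum_gen] at e1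
    have e4 : (0 : ℝ) < 2 ^ (n l) := by positivity
    by_cases hi : i ∈ c l
    · have e2 := hc l i hi
      rw [← e1, pow_succ] at e2
      nlinarith
    · rw [Multiset.count_eq_zero_of_notMem hi] at e1
      have := l.2.1 i
      have : (E l).1 i = 0 := by
        simpa using e1
      linarith
  let nx : {l : ℕ → ℝ // IsWeight l} → {l : ℕ → ℝ // IsWeight l} := fun l =>
    ⟨fun i => 2 * l.1 i - (E l).1 i, .of (fun i => by linarith [hEle l i]) (by
      have := (l.2.hasSum.mul_left 2).sub (hEG l).weight.hasSum
      norm_num at this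
      exact this)⟩
  obtain ⟨u, hu, -⟩ := hit _ fun l => ((E l).2, nx l)
  classical
  refine ⟨fun l => if h : IsWeight l then u ⟨l, h⟩ else x 0, fun l hl => ?_, fun p hp => ?_⟩
  · beta_reduce
    rw [dif_pos hl]
    let L : ℕ → {l : ℕ → ℝ // IsWeight l} := fun k => nx^[k] ⟨l, hl⟩
    refine EvalGraph.lim (m := m) (x := x) (fun k => ((L k).1, u (L k))) (fun k => E (L k))
      (fun k => hEG _) (fun k => (L k).2) (fun k => ?_) 0
    have : L (k + 1) = nx (L k) := Function.iterate_succ_apply' _ _ _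
    simp only [this]
    refine Prod.ext (funext fun i => ?_) (hu _)
    simp only [pairMid, nx]
    ring
  · beta_reduce
    rw [dif_pos hp.weight]
    have h3 : ∀ p : {p // EvalGraph m x p}, ∃ z : {p // EvalGraph m x p},
        p.1 = pairMid m (E ⟨p.1.1, p.2.weight⟩) z.1 := by
      intro p
      obtain ⟨z, hz, e⟩ := p.2.split hm _ _ (hcard ⟨p.1.1, p.2.weight⟩) (hc _) _ (hE _)
      exact ⟨⟨z, hz⟩, e⟩
    choose f hf using h3
    have huniq := (hit {p // EvalGraph m x p} fun p => ((E ⟨p.1.1, p.2.weight⟩).2, f p)).unique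
      (y₁ := fun p => p.1.2) (y₂ := fun p => u ⟨p.1.1, p.2.weight⟩)
      (fun p => congrArg Prod.snd (hf p)) (fun p => by
        dsimp only
        rw [hu]
        dsimp only
        congr 2
        apply Subtype.ext
        funext i
        have := congrFun (congrArg Prod.fst (hf p)) i
        simp only [pairMid] at this
        simp only [nx]
        linarith)
    exact congrFun huniq ⟨p, hp⟩

theorem comb_exists {X : Type} {m : X → X → X} (hm : IsMidpoint m) (hit : Iterative m) :
    ∃ C : (ℕ → ℝ) → (ℕ → X) → X,
      (∀ k x, C (Pi.single k 1) x = x k) ∧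
      (∀ l k x, IsWeight l → IsWeight k →
        C (fun i => (1 / 2) * l i + (1 - 1 / 2) * k i) x = m (C l x) (C k x)) ∧
      (∀ (x : ℕ → X) (h : (ℕ → ℝ) → X), (∀ k, h (Pi.single k 1) = x k) →
        (∀ l k, IsWeight l → IsWeight k →
          h (fun i => (1 / 2) * l i + (1 - 1 / 2) * k i) = m (h l) (h k)) →
        ∀ l, IsWeight l → h l = C l x) := by
  choose u hu1 hu2 using fun x => graph_exists hm hit x
  refine ⟨fun l x => u x l, fun k x => ?_, fun l k x hl hk => ?_, fun x h h1 h2 l hl => ?_⟩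
  · exact (hu2 x _ (.gen k)).symm
  · exact (hu2 x _ (.mid (hu1 x l hl) (hu1 x k hk))).symm
  · have key : ∀ p, EvalGraph m x p → h p.1 = p.2 := by
      intro p hp
      induction hp with
      | gen i => exact h1 i
      | mid hp hq e1 e2 =>
        have := h2 _ _ hp.weight hq.weight
        rw [e1, e2] at this
        exact this
      | lim p q hq hw e j ih =>
        refine congrFun (hit.canon (fun k => h (p k).1) (fun k => (p k).2) (fun k => (q k).2)
          (fun k => ?_) (fun k => congrArg Prod.snd (e k))) j
        have := h2 _ _ (hq k).weight (hw (k + 1))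
        rw [ih] at this
        rw [← this]
        exact congrArg (fun a => h a.1) (e k)
    exact key _ (hu1 x l hl)

theorem pairWeight (t : ℝ) (h0 : 0 ≤ t) (h1 : t ≤ 1) :
    IsWeight (fun i : ℕ => if i = 0 then t else if i = 1 then 1 - t else 0) := by
  have := (IsWeight.single 0).mix (IsWeight.single 1) t h0 h1
  convert this using 2 with i
  rcases i with _ | _ | i <;> simp

namespace SuperconvexStr

variable {X : Type} (S : SuperconvexStr X)

theorem comb_single (k : ℕ) (x : ℕ → X) : S.comb (Pi.single k 1) x = x k :=
  S.proj _ (.single k) k (by simp) (fun i hi => by simp [hi]) x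

theorem comb_mix {l k : ℕ → ℝ} (hl : IsWeight l) (hk : IsWeight k) (t : ℝ) (h0 : 0 ≤ t)
    (h1 : t ≤ 1) (x : ℕ → X) :
    S.comb (fun i => t * l i + (1 - t) * k i) x = S.pair t (S.comb l x) (S.comb k x) := by
  have := S.compos _ (pairWeight t h0 h1) (fun i => if i = 0 then l else k)
    (fun i => by split_ifs <;> assumption) x
  unfold pair
  have e : (fun i : ℕ => S.comb (if i = 0 then l else k) x) =
      fun i => if i = 0 then S.comb l x else S.comb k x := by
    funext i; split_ifs <;> rfl
  rw [e] at this
  rw [this]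
  congr 1
  funext j
  rw [tsum_eq_sum (s := Finset.range 2)]
  · simp [Finset.sum_range_succ]
  · intro i hi
    have : i ≠ 0 ∧ i ≠ 1 := by simp at hi; omega
    simp [this.1, this.2]

theorem pair_one (x y : X) : S.pair 1 x y = x := by
  have := S.comb_mix (.single 0) (.single 1) 1 (by norm_num) (by norm_num)
    (fun i => if i = 0 then x else y)
  rw [comb_single, comb_single] at this
  have h2 := S.comb_single 0 (fun i => if i = 0 then x else y)
  simp at this h2
  exact this.symm.trans h2

theorem pair_zero (x y : X) : S.pair 0 x y = y := by
  have := S.comb_mix (.single 0) (.single 1) 0 (by norm_num) (by norm_num)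
    (fun i => if i = 0 then x else y)
  rw [comb_single, comb_single] at this
  have h2 := S.comb_single 1 (fun i => if i = 0 then x else y)
  simp at this h2
  exact this.symm.trans h2

theorem pair_self (t : ℝ) (h0 : 0 ≤ t) (h1 : t ≤ 1) (x : X) : S.pair t x x = x := by
  have := S.comb_mix (.single 0) (.single 0) t h0 h1 (fun _ => x)
  rw [comb_single] at this
  refine this.symm.trans ((?_ : _ = _).trans (S.comb_single 0 (fun _ => x)))
  congr 1
  funext i
  ring

/-- associativity of binary combinations -/
theorem pair_assoc (a b s c : ℝ) (ha0 : 0 ≤ a) (ha1 : a ≤ 1) (hb0 : 0 ≤ b) (hb1 : b ≤ 1)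
    (hs0 : 0 ≤ s) (hs1 : s ≤ 1) (hc0 : 0 ≤ c) (hc1 : c ≤ 1) (h1 : s * c = a)
    (h2 : s = a + (1 - a) * b) (q r x : X) :
    S.pair a q (S.pair b r x) = S.pair s (S.pair c q r) x := by
  let e : ℕ → X := fun i => if i = 0 then q else if i = 1 then r else x
  have e0 : S.comb (Pi.single 0 1) e = q := by rw [comb_single]; simp [e]
  have e1 : S.comb (Pi.single 1 1) e = r := by rw [comb_single]; simp [e]
  have e2 : S.comb (Pi.single 2 1) e = x := by rw [comb_single]; simp [e]
  have w0 := IsWeight.single 0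
  have w1 := IsWeight.single 1
  have w2 := IsWeight.single 2
  rw [← e0, ← e1, ← e2, ← S.comb_mix w1 w2 b hb0 hb1, ← S.comb_mix w0 w1 c hc0 hc1,
    ← S.comb_mix w0 (w1.mix w2 b hb0 hb1) a ha0 ha1,
    ← S.comb_mix (w0.mix w1 c hc0 hc1) w2 s hs0 hs1]
  congr 1
  funext i
  generalize (Pi.single 0 1 : ℕ → ℝ) i = u
  generalize (Pi.single 1 1 : ℕ → ℝ) i = v
  generalize (Pi.single 2 1 : ℕ → ℝ) i = w
  linear_combination (-u + v) * h1 + (-v + w) * h2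

theorem pair_assoc' (a b : ℝ) (ha0 : 0 ≤ a) (ha1 : a ≤ 1) (hb0 : 0 ≤ b) (hb1 : b ≤ 1) (q r : X) :
    ∃ q', ∀ x, S.pair a q (S.pair b r x) = S.pair (a + (1 - a) * b) q' x := by
  have hp : 0 ≤ (1 - a) * b := mul_nonneg (by linarith) hb0
  have hs1 : a + (1 - a) * b ≤ 1 := by nlinarith
  by_cases hs : a + (1 - a) * b = 0
  · have ha : a = 0 := by linarith
    subst ha
    have hb : b = 0 := by linarith
    subst hb
    exact ⟨q, fun x => by simp [pair_zero]⟩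
  · have hs' : 0 < a + (1 - a) * b := lt_of_le_of_ne (by linarith) (Ne.symm hs)
    refine ⟨S.pair (a / (a + (1 - a) * b)) q r, fun x => ?_⟩
    refine S.pair_assoc a b _ _ ha0 ha1 hb0 hb1 hs'.le hs1 (by positivity) ?_ ?_ rfl _ _ _
    · rw [div_le_one hs']; linarith
    · field_simp

theorem cancel {m : X → X → X} (hS : ∀ x y : X, S.pair (1 / 2) x y = m x y)
    (hm : IsMidpoint m) (hc : _root_.Cancellative m) : S.Cancellative := by
  intro a ha0 ha1 x y z h
  obtain ⟨n, hn⟩ := exists_pow_lt_of_lt_one ha0 (show (1 / 2 : ℝ) < 1 by norm_num)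
  have hp : (0 : ℝ) < (1 / 2) ^ n := by positivity
  have key : ∀ w, S.pair ((1 / 2) ^ n / a) (S.pair a w z) z = S.pair ((1 / 2) ^ n) w z := by
    intro w
    have hd : (1 / 2) ^ n / a ≤ 1 := by rw [div_le_one ha0]; exact hn.le
    have hd0 : 0 ≤ (1 / 2) ^ n / a := by positivity
    have h1a : 0 < 1 - (1 / 2 : ℝ) ^ n := by linarith
    have := S.pair_assoc ((1 / 2) ^ n) (((1 / 2) ^ n / a - (1 / 2) ^ n) / (1 - (1 / 2) ^ n))
      ((1 / 2) ^ n / a) a hp.le (by linarith) ?_ ?_ hd0 hd ha0.le ha1.le (by field_simp)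
      (by field_simp; ring) w z z
    · rw [← this, S.pair_self]
      · refine div_nonneg ?_ h1a.le
        rw [sub_nonneg, le_div_iff₀ ha0]
        nlinarith
      · rw [div_le_one h1a]
        linarith
    · refine div_nonneg ?_ h1a.le
      rw [sub_nonneg, le_div_iff₀ ha0]
      nlinarith
    · rw [div_le_one h1a]
      linarith
  have h2 : S.pair ((1 / 2) ^ n) x z = S.pair ((1 / 2) ^ n) y z := by
    rw [← key, ← key, h]
  clear key hp hn
  induction n with
  | zero => simpa [pair_one] using h2
  | succ n ih =>
    apply ih
    have step : ∀ w, S.pair ((1 / 2) ^ (n + 1)) w z = m z (S.pair ((1 / 2) ^ n) w z) := by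
      intro w
      rw [hm.2.1, ← hS]
      have hp : (0 : ℝ) < (1 / 2) ^ n := by positivity
      have hp1 : (1 / 2 : ℝ) ^ n ≤ 1 := pow_le_one₀ (by norm_num) (by norm_num)
      have h1a : 0 < 1 - (1 / 2 : ℝ) ^ (n + 1) := by rw [pow_succ]; linarith
      have hb0 : 0 ≤ (1 / 2 - (1 / 2 : ℝ) ^ (n + 1)) / (1 - (1 / 2) ^ (n + 1)) := by
        refine div_nonneg ?_ h1a.le
        rw [pow_succ]; linarith
      have hb1 : (1 / 2 - (1 / 2 : ℝ) ^ (n + 1)) / (1 - (1 / 2) ^ (n + 1)) ≤ 1 := by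
        rw [div_le_one h1a]; linarith
      rw [← S.pair_assoc ((1 / 2) ^ (n + 1)) _ (1 / 2) ((1 / 2) ^ n) (by positivity)
        (by linarith) hb0 hb1 (by norm_num) (by norm_num) hp.le hp1 (by ring)
        (by rw [mul_div_cancel₀ _ h1a.ne']; ring) w z z, S.pair_self _ hb0 hb1]
    rw [step, step] at h2
    exact hc _ _ _ h2

theorem iter {m : X → X → X} (hS : ∀ x y : X, S.pair (1 / 2) x y = m x y)
    (hit : _root_.Iterative m) : S.Iterative := by
  intro x y lam mu hl hmu hsum hx ht
  let P : ℕ → ℝ := fun n => ∏ j ∈ Finset.range n, mu j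
  have hP : ∀ n, 0 < P n := fun n => Finset.prod_pos fun j _ => (hmu j).1
  have hPs : ∀ n, P (n + 1) = P n * mu n := fun n => Finset.prod_range_succ _ _
  let w : ℕ → ℕ → ℝ := fun k i => if i < k then 0 else lam i * P i / P k
  have hw0 : ∀ k i, 0 ≤ w k i := by
    intro k i
    simp only [w]
    split_ifs
    · exact le_rfl
    · exact div_nonneg (mul_nonneg (hl i).1.le (hP i).le) (hP k).le
  have hrec : ∀ k, w k = fun i => lam k * (Pi.single k 1 : ℕ → ℝ) i + (1 - lam k) * w (k + 1) i := by
    intro k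
    funext i
    have e : 1 - lam k = mu k := by linarith [hsum k]
    rw [e]
    rcases lt_trichotomy i k with h | h | h
    · simp [w, h, h.ne, Nat.lt_succ_of_lt h]
    · subst h
      simp [w, (hP i).ne']
    · have h1 : ¬ i < k := by omega
      have h2 : ¬ i < k + 1 := by omega
      simp only [w, h1, h2, if_false, Pi.single_apply, h.ne', mul_zero, zero_add, hPs]
      have := (hP k).ne'
      have := (hmu k).1.ne'
      field_simp
  have hw : ∀ k, IsWeight (w k) := by
    intro k
    induction k with
    | zero =>
      refine .of (hw0 0) ?_
      rw [hasSum_iff_tendsto_nat_of_nonneg (hw0 0)]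
      have h1 : ∀ n, ∑ i ∈ Finset.range n, w 0 i = 1 - P n := by
        intro n
        induction n with
        | zero => simp [P]
        | succ n ih =>
          rw [Finset.sum_range_succ, ih, hPs]
          have e : lam n = 1 - mu n := by linarith [hsum n]
          simp [w, P, e]
          ring
      simp only [h1]
      simpa using ht.const_sub 1
    | succ k ih =>
      refine .of (hw0 _) ?_
      have h1 := (ih.hasSum.sub ((IsWeight.single k).hasSum.mul_left (lam k))).div_const (mu k)
      have e : 1 - lam k = mu k := by linarith [hsum k]
      rw [mul_one, e, div_self (hmu k).1.ne'] at h1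
      have h2 : w (k + 1) = fun i => (w k i - lam k * (Pi.single k 1 : ℕ → ℝ) i) / mu k := ?_
      · rw [h2]; exact h1
      funext i
      rw [congrFun (hrec k) i, e]
      have := (hmu k).1.ne'
      field_simp
      ring
  let z : ℕ → X := fun k => S.comb (w k) y
  have hz : ∀ k, z k = S.pair (lam k) (y k) (z (k + 1)) := by
    intro k
    have := S.comb_mix (.single k) (hw (k + 1)) (lam k) (hl k).1.le (hl k).2.le y
    rw [← hrec, comb_single] at this
    exact this
  have hz0 : z 0 = S.comb (fun i => lam i * ∏ j ∈ Finset.range i, mu j) y := by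
    simp only [z]
    congr 1
    funext i
    simp [w, P]
  rw [← hz0]
  -- expansion
  have expand : ∀ n d, ∀ a q, 0 ≤ a → a ≤ 1 → ∃ a' q', 0 ≤ a' ∧ a' ≤ 1 ∧
      (1 - a') * P n = (1 - a) * P (n + d) ∧
      S.pair a q (x n) = S.pair a' q' (x (n + d)) ∧
      S.pair a q (z n) = S.pair a' q' (z (n + d)) := by
    intro n d a q ha0 ha1
    induction d with
    | zero => exact ⟨a, q, ha0, ha1, rfl, rfl, rfl⟩
    | succ d ih =>
      obtain ⟨b, r, hb0, hb1, e1, e2, e3⟩ := ih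
      obtain ⟨r', hr'⟩ := S.pair_assoc' b (lam (n + d)) hb0 hb1 (hl _).1.le (hl _).2.le r (y (n + d))
      have h1 := hl (n + d)
      have h2 := hsum (n + d)
      refine ⟨b + (1 - b) * lam (n + d), r', ?_, ?_, ?_, ?_, ?_⟩
      · nlinarith
      · nlinarith
      · have h3 : mu (n + d) = 1 - lam (n + d) := by linarith
        rw [← add_assoc, hPs, ← mul_assoc, ← e1, h3]
        ring
      · rw [e2, hx (n + d), hr']; rfl
      · rw [e3, hz (n + d), hr']; rfl
  have step : ∀ p : {p : ℝ × X × ℕ // 0 ≤ p.1 ∧ p.1 ≤ 1}, ∃ (c : X)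
      (p' : {p : ℝ × X × ℕ // 0 ≤ p.1 ∧ p.1 ≤ 1}),
      S.pair p.1.1 p.1.2.1 (x p.1.2.2) = m c (S.pair p'.1.1 p'.1.2.1 (x p'.1.2.2)) ∧
      S.pair p.1.1 p.1.2.1 (z p.1.2.2) = m c (S.pair p'.1.1 p'.1.2.1 (z p'.1.2.2)) := by
    rintro ⟨⟨a, q, n⟩, ha0, ha1⟩
    dsimp only at ha0 ha1 ⊢
    have hPn := hP n
    obtain ⟨d, hd⟩ : ∃ d, P (n + d) ≤ P n / 2 := by
      have h1 := ht.eventually (gt_mem_nhds (show (0 : ℝ) < P n / 2 by linarith))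
      obtain ⟨N, hN⟩ := (h1.and (Filter.eventually_ge_atTop n)).exists
      obtain ⟨d, rfl⟩ := Nat.exists_eq_add_of_le hN.2
      exact ⟨d, hN.1.le⟩
    obtain ⟨b, r, hb0, hb1, e1, e2, e3⟩ := expand n d a q ha0 ha1
    have hPd := hP (n + d)
    have hb : 1 / 2 ≤ b := by
      by_contra hlt
      push Not at hlt
      nlinarith
    have hh : ∀ v, S.pair b r v = m r (S.pair (2 * b - 1) r v) := by
      intro v
      have hc1 : 1 / (2 * b) ≤ 1 := by rw [div_le_one (by linarith)]; linarith
      have hc0 : 0 ≤ 1 / (2 * b) := by positivity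
      have hbn : b ≠ 0 := by linarith
      rw [← hS, S.pair_assoc (1 / 2) (2 * b - 1) b (1 / (2 * b)) (by norm_num) (by norm_num)
        (by linarith) (by linarith) hb0 hb1 hc0 hc1 (by field_simp) (by ring), S.pair_self _ hc0 hc1]
    refine ⟨r, ⟨(2 * b - 1, r, n + d), by dsimp only; linarith, by dsimp only; linarith⟩, ?_, ?_⟩
    · rw [e2, hh]
    · rw [e3, hh]
  choose c nx h1 h2 using step
  have huniq := (hit _ fun p => (c p, nx p)).unique h1 h2
  have := congrFun huniq ⟨(0, x 0, 0), le_rfl, zero_le_one⟩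
  simpa [pair_zero] using this

end SuperconvexStr
/-- Every iterative midpoint set carries exactly one superconvex structure
whose binary ½-½ combination is the midpoint operation; this structure is
iterative, and it is cancellative whenever the midpoint operation is. -/
theorem unique_superconvex_extension (X : Type) (m : X → X → X)
    (hm : IsMidpoint m) (hit : Iterative m) :
    ∃ S : SuperconvexStr X,
      (∀ x y : X, S.pair (1 / 2) x y = m x y) ∧
      S.Iterative ∧
      (Cancellative m → S.Cancellative) ∧
      ∀ S' : SuperconvexStr X, (∀ x y : X, S'.pair (1 / 2) x y = m x y) →
        ∀ lam, IsWeight lam → ∀ x : ℕ → X, S'.comb lam x = S.comb lam x := by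
  obtain ⟨C, hC1, hC2, hC3⟩ := comb_exists hm hit
  let S : SuperconvexStr X :=
    { comb := C
      proj := by
        intro lam _ k hk h0 x
        have : lam = Pi.single k 1 := by
          funext i
          by_cases h : i = k
          · subst h; simp [hk]
          · simp [h, h0 i h]
        rw [this, hC1]
      compos := by
        intro lam hlam mu hmu x
        refine (hC3 (fun i => C (mu i) x) (fun l => C (fun j => ∑' i, l i * mu i j) x)
          (fun k => ?_) (fun l k hl hk => ?_) lam hlam).symm
        · beta_reduce
          congr 1
          funext j
          rw [tsum_eq_single k]
          · simp
          · intro i hi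
            simp [hi]
        · beta_reduce
          rw [← hC2 _ _ x (hl.comp hmu) (hk.comp hmu)]
          congr 1
          funext j
          rw [← tsum_mul_left, ← tsum_mul_left, ← Summable.tsum_add]
          · congr 1
            funext i
            ring
          · exact (hl.summable_comp hmu j).mul_left _
          · exact (hk.summable_comp hmu j).mul_left _ }
  have hS : ∀ x y : X, S.pair (1 / 2) x y = m x y := by
    intro x y
    have h1 := S.comb_mix (.single 0) (.single 1) (1 / 2) (by norm_num) (by norm_num)
      (fun i => if i = 0 then x else y)
    have h2 := hC2 _ _ (fun i => if i = 0 then x else y) (.single 0) (.single 1)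
    rw [S.comb_single, S.comb_single] at h1
    rw [hC1, hC1] at h2
    exact h1.symm.trans h2
  refine ⟨S, hS, S.iter hS hit, S.cancel hS hm, fun S' hS' lam hlam x => ?_⟩
  refine hC3 x (fun l => S'.comb l x) (fun k => S'.comb_single k x) (fun l k hl hk => ?_) lam hlam
  rw [← hS']
  exact S'.comb_mix hl hk (1 / 2) (by norm_num) (by norm_num) x
end
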